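/- Let d ≥ 1, let S be a finite nonempty set, and let Q be a σ-finite measure on (ℝ^d)^S. Let B : ℝ^d → [0,∞) be measurable with z_B := ∫ exp(−∑_{i∈S} B(x_i)) dQ(x) ∈ (0,∞), and for each i ∈ S let μ_i be a probability measure on ℝ^d with ∫ B dμ_i < ∞. Let Γ = { Π : Π a probability measure on (ℝ^d)^S with marginal at each i ∈ S equal to μ_i }. Then on Γ ∩ { Π : Π ≪ Q }, the quantity KL(Π ‖ Q) := ∫ log(dΠ/dQ) dΠ is well-defined in (−∞,+∞] and bounded below, and if some Π⁰ ∈ Γ satisfies KL(Π⁰ ‖ Q) < ∞, then there exists a minimiser of KL(· ‖ Q) over Γ, which is unique. -/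

import Mathlib

open MeasureTheory ProbabilityTheory Classical

open scoped ENNReal

/-- Kullback-Leibler divergence of a probability measure `μ` with respect to a σ-finite
measure `ν`, valued in `(-∞, +∞]`: `KL(μ‖ν) = ∫ log(dμ/dν) dμ` when `μ ≪ ν` and the
log-likelihood ratio is `μ`-integrable, and `+∞` otherwise (in particular when `μ` is not
absolutely continuous with respect to `ν`). -/
noncomputable def KL {α : Type*} [MeasurableSpace α] (μ ν : Measure α) : EReal :=
  if μ ≪ ν ∧ Integrable (llr μ ν) μ then ((∫ x, llr μ ν x ∂μ : ℝ) : EReal) else ⊤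

/-!
Tilting `Q` by `-∑ B(xᵢ)` gives a probability measure `Q'`, and `KL(P ‖ Q) - klDiv P Q'` depends on
the marginals of `P` only. The midpoint inequality
`2 klFun ((a + b) / 2) + (√a - √b)² / 2 ≤ klFun a + klFun b`
makes `klDiv · Q'` uniformly convex for the Hellinger distance. Hence a minimiser over a convex set
is unique, and minimising sequences are Cauchy: the square roots of their densities converge in
`L²(Q')`. Then the measures converge setwise, which preserves the marginals, and by Fatou's lemma
the limit is a minimiser.
-/

section KullbackLeibler

open InformationTheory Filter Topology

lemma two_mul_sub_sqrt_mul_sqrt_le_mul_log_sub {a m : ℝ} (ha : 0 ≤ a) (hm : 0 < m) :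
    2 * (a - √a * √m) ≤ a * Real.log a - a * Real.log m := by
  rcases ha.eq_or_lt with rfl | ha
  · simp
  have hsa := Real.sqrt_pos.2 ha
  have hsm := Real.sqrt_pos.2 hm
  have hlog := Real.log_le_sub_one_of_pos (div_pos hsm hsa)
  rw [Real.log_div hsm.ne' hsa.ne', Real.log_sqrt ha.le, Real.log_sqrt hm.le] at hlog
  have hdiv : a * (√m / √a) = √a * √m := by
    nth_rw 1 [← Real.mul_self_sqrt ha.le]
    field_simp
  linear_combination 2 * a * hlog + 2 * hdiv

lemma two_mul_klFun_midpoint_add_le {a b : ℝ} (ha : 0 ≤ a) (hb : 0 ≤ b) :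
    2 * klFun ((a + b) / 2) + (√a - √b) ^ 2 / 2 ≤ klFun a + klFun b := by
  rcases (by positivity : 0 ≤ (a + b) / 2).eq_or_lt with h0 | hm
  · obtain rfl : a = 0 := by linarith
    obtain rfl : b = 0 := by linarith
    norm_num [klFun_zero]
  have hab : (√a - √b) ^ 2 / 2 ≤
      2 * (a - √a * √((a + b) / 2)) + 2 * (b - √b * √((a + b) / 2)) := by
    have hsq := sq_nonneg (√a + √b - 2 * √((a + b) / 2))
    linear_combination hsq / 2 + Real.sq_sqrt ha + Real.sq_sqrt hb + 2 * Real.sq_sqrt hm.le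
  simp only [klFun_apply]
  linear_combination hab + two_mul_sub_sqrt_mul_sqrt_le_mul_log_sub ha hm +
    two_mul_sub_sqrt_mul_sqrt_le_mul_log_sub hb hm

variable {α : Type*} [MeasurableSpace α] {P P' ν : Measure α}

lemma eLpNorm_two_sq_eq_lintegral (f : α → ℝ) (ν : Measure α) :
    eLpNorm f 2 ν ^ 2 = ∫⁻ x, ENNReal.ofReal (f x ^ 2) ∂ν := by
  have h := eLpNorm_nnreal_pow_eq_lintegral (f := f) (μ := ν) (p := 2) two_ne_zero
  simp only [NNReal.coe_ofNat, ENNReal.rpow_two, ENNReal.coe_ofNat] at h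
  rw [h]
  refine lintegral_congr fun x => ?_
  rw [← enorm_pow, Real.enorm_of_nonneg (by positivity)]

/-- The square root of the density of `P` with respect to `ν`, through which the finite measures
absolutely continuous with respect to `ν` embed into `L²(ν)`. -/
noncomputable def sqrtDensity (P ν : Measure α) (x : α) : ℝ := √(P.rnDeriv ν x).toReal

/-- The Hellinger distance, without normalising factor, of the parts of `P` and `P'` absolutely
continuous with respect to the reference measure `ν`; it does not see their singular parts. -/
noncomputable def hellingerDist (P P' ν : Measure α) : ℝ≥0∞ :=
  eLpNorm (sqrtDensity P ν - sqrtDensity P' ν) 2 ν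

lemma sq_sqrtDensity (P ν : Measure α) (x : α) : sqrtDensity P ν x ^ 2 = (P.rnDeriv ν x).toReal :=
  Real.sq_sqrt ENNReal.toReal_nonneg

lemma measurable_sqrtDensity (P ν : Measure α) : Measurable (sqrtDensity P ν) := by
  unfold sqrtDensity
  fun_prop

lemma memLp_sqrtDensity (P ν : Measure α) [IsFiniteMeasure P] : MemLp (sqrtDensity P ν) 2 ν := by
  rw [memLp_two_iff_integrable_sq (measurable_sqrtDensity P ν).aestronglyMeasurable]
  simpa only [sq_sqrtDensity] using Measure.integrable_toReal_rnDeriv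

lemma eLpNorm_sqrtDensity_restrict_sq [SigmaFinite P] [SigmaFinite ν] (hP : P ≪ ν) (A : Set α) :
    eLpNorm (sqrtDensity P ν) 2 (ν.restrict A) ^ 2 = P A := by
  rw [eLpNorm_two_sq_eq_lintegral, ← Measure.setLIntegral_rnDeriv hP]
  refine lintegral_congr_ae (ae_restrict_of_ae ?_)
  filter_upwards [P.rnDeriv_lt_top ν] with x hx
  rw [sq_sqrtDensity, ENNReal.ofReal_toReal hx.ne]

lemma sqrtDensity_withDensity_sq [SigmaFinite ν] {g : α → ℝ} (hg : AEMeasurable g ν) :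
    sqrtDensity (ν.withDensity fun x => ENNReal.ofReal (g x ^ 2)) ν =ᵐ[ν] fun x => |g x| := by
  filter_upwards [Measure.rnDeriv_withDensity₀ ν (hg.pow_const 2).ennreal_ofReal] with x hx
  rw [sqrtDensity, hx, ENNReal.toReal_ofReal (sq_nonneg _), Real.sqrt_sq_eq_abs]

lemma eq_of_hellingerDist_eq_zero [SigmaFinite P] [SigmaFinite P'] [SigmaFinite ν]
    (hP : P ≪ ν) (hP' : P' ≪ ν) (h : hellingerDist P P' ν = 0) : P = P' := by
  rw [hellingerDist, eLpNorm_eq_zero_iff ((measurable_sqrtDensity P ν).sub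
    (measurable_sqrtDensity P' ν)).aestronglyMeasurable two_ne_zero] at h
  ext A -
  rw [← eLpNorm_sqrtDensity_restrict_sq hP, ← eLpNorm_sqrtDensity_restrict_sq hP',
    eLpNorm_congr_ae (ae_restrict_of_ae (sub_ae_eq_zero _ _ |>.1 h))]

lemma tendsto_measure_of_tendsto_hellingerDist [SigmaFinite ν] {p : ℕ → Measure α}
    [∀ n, IsFiniteMeasure (p n)] [IsFiniteMeasure P] (hp : ∀ n, p n ≪ ν) (hP : P ≪ ν)
    (h : Tendsto (fun n => hellingerDist (p n) P ν) atTop (𝓝 0)) (A : Set α) :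
    Tendsto (fun n => p n A) atTop (𝓝 (P A)) := by
  have hpA n := (memLp_sqrtDensity (p n) ν).restrict A
  have hPA := (memLp_sqrtDensity P ν).restrict A
  have hA : Tendsto (fun n => eLpNorm (sqrtDensity (p n) ν - sqrtDensity P ν) 2 (ν.restrict A))
      atTop (𝓝 0) :=
    tendsto_of_tendsto_of_tendsto_of_le_of_le tendsto_const_nhds h (fun _ => zero_le)
      fun _ => eLpNorm_restrict_le _ _ _ _
  have hnorm := ((Lp.tendsto_Lp_iff_tendsto_eLpNorm'' _ hpA _ hPA).2 hA).norm
  simp only [Lp.norm_toLp] at hnorm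
  rw [ENNReal.tendsto_toReal_iff (fun n => (hpA n).eLpNorm_ne_top) hPA.eLpNorm_ne_top] at hnorm
  simpa only [eLpNorm_sqrtDensity_restrict_sq (hp _), eLpNorm_sqrtDensity_restrict_sq hP]
    using ENNReal.Tendsto.pow (n := 2) hnorm

lemma exists_tendsto_hellingerDist [SigmaFinite ν] {p : ℕ → Measure α}
    [∀ n, IsFiniteMeasure (p n)] {b : ℕ → ℝ≥0∞} (hb : ∑' n, b n ≠ ∞)
    (h : ∀ N n m, N ≤ n → N ≤ m → hellingerDist (p n) (p m) ν < b N) :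
    ∃ P, IsFiniteMeasure P ∧ P ≪ ν ∧ Tendsto (fun n => hellingerDist (p n) P ν) atTop (𝓝 0) := by
  obtain ⟨g, hg, hlim⟩ := Lp.cauchy_complete_eLpNorm (one_le_two : (1 : ℝ≥0∞) ≤ 2)
    (fun n => memLp_sqrtDensity (p n) ν) hb h
  refine ⟨ν.withDensity fun x => ENNReal.ofReal (g x ^ 2), ?_, withDensity_absolutelyContinuous _ _,
    tendsto_of_tendsto_of_tendsto_of_le_of_le tendsto_const_nhds hlim (fun _ => zero_le)
      fun n => eLpNorm_mono_ae ?_⟩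
  · refine isFiniteMeasure_withDensity ?_
    rw [← eLpNorm_two_sq_eq_lintegral]
    exact ENNReal.pow_ne_top hg.eLpNorm_ne_top
  · filter_upwards [sqrtDensity_withDensity_sq hg.aestronglyMeasurable.aemeasurable] with x hx
    have hs : |sqrtDensity (p n) ν x| = sqrtDensity (p n) ν x := abs_of_nonneg (Real.sqrt_nonneg _)
    simp only [Pi.sub_apply, Real.norm_eq_abs, hx]
    simpa only [hs] using abs_abs_sub_abs_le_abs_sub (sqrtDensity (p n) ν x) (g x)

lemma lintegral_klFun_rnDeriv_le_klDiv (P ν : Measure α) [IsFiniteMeasure P] [IsFiniteMeasure ν] :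
    ∫⁻ x, ENNReal.ofReal (klFun (P.rnDeriv ν x).toReal) ∂ν ≤ klDiv P ν := by
  rw [klDiv_eq_lintegral_klFun]
  split_ifs
  exacts [le_rfl, le_top]

lemma klDiv_le_of_tendsto_hellingerDist [IsFiniteMeasure ν] {p : ℕ → Measure α}
    [∀ n, IsFiniteMeasure (p n)] [IsFiniteMeasure P] (hP : P ≪ ν)
    (h : Tendsto (fun n => hellingerDist (p n) P ν) atTop (𝓝 0)) {L : ℝ≥0∞}
    (hL : Tendsto (fun n => klDiv (p n) ν) atTop (𝓝 L)) : klDiv P ν ≤ L := by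
  obtain ⟨ns, hns, hae⟩ := (tendstoInMeasure_of_tendsto_eLpNorm two_ne_zero
    (fun n => (measurable_sqrtDensity (p n) ν).aestronglyMeasurable)
    (measurable_sqrtDensity P ν).aestronglyMeasurable h).exists_seq_tendsto_ae
  calc klDiv P ν
    _ = ∫⁻ x, liminf (fun k => ENNReal.ofReal (klFun ((p (ns k)).rnDeriv ν x).toReal))
        atTop ∂ν := by
      rw [klDiv_eq_lintegral_klFun_of_ac hP]
      refine lintegral_congr_ae ?_
      filter_upwards [hae] with x hx
      have hdensity := hx.pow 2
      simp only [sq_sqrtDensity] at hdensity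
      exact (((ENNReal.continuous_ofReal.comp continuous_klFun).tendsto _).comp
        hdensity).liminf_eq.symm
    _ ≤ liminf (fun k => ∫⁻ x, ENNReal.ofReal (klFun ((p (ns k)).rnDeriv ν x).toReal) ∂ν) atTop :=
      lintegral_liminf_le fun k => by fun_prop
    _ ≤ liminf (fun k => klDiv (p (ns k)) ν) atTop :=
      liminf_le_liminf (Eventually.of_forall fun k => lintegral_klFun_rnDeriv_le_klDiv _ _)
    _ = L := (hL.comp hns.tendsto_atTop).liminf_eq

lemma toReal_rnDeriv_midpoint (P P' ν : Measure α) [IsFiniteMeasure P] [IsFiniteMeasure P']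
    [SigmaFinite ν] :
    (fun x => (((2⁻¹ : ℝ≥0∞) • P + (2⁻¹ : ℝ≥0∞) • P').rnDeriv ν x).toReal) =ᵐ[ν]
      fun x => ((P.rnDeriv ν x).toReal + (P'.rnDeriv ν x).toReal) / 2 := by
  have := P.smul_finite (c := 2⁻¹) (by simp)
  have := P'.smul_finite (c := 2⁻¹) (by simp)
  filter_upwards [Measure.rnDeriv_add ((2⁻¹ : ℝ≥0∞) • P) ((2⁻¹ : ℝ≥0∞) • P') ν,
    Measure.rnDeriv_smul_left_of_ne_top P ν (r := 2⁻¹) (by simp),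
    Measure.rnDeriv_smul_left_of_ne_top P' ν (r := 2⁻¹) (by simp),
    P.rnDeriv_lt_top ν, P'.rnDeriv_lt_top ν] with x hadd hP hP' hPtop hP'top
  rw [hadd, Pi.add_apply, hP, hP', Pi.smul_apply, Pi.smul_apply, ← smul_add, smul_eq_mul,
    ENNReal.toReal_mul, ENNReal.toReal_add hPtop.ne hP'top.ne, ENNReal.toReal_inv,
    ENNReal.toReal_ofNat, inv_mul_eq_div]

lemma two_mul_klDiv_midpoint_add_hellingerDist_sq_le [IsFiniteMeasure P] [IsFiniteMeasure P']
    [IsFiniteMeasure ν] :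
    2 * klDiv ((2⁻¹ : ℝ≥0∞) • P + (2⁻¹ : ℝ≥0∞) • P') ν + hellingerDist P P' ν ^ 2 / 2 ≤
      klDiv P ν + klDiv P' ν := by
  by_cases hP : P ≪ ν; swap
  · simp [hP]
  by_cases hP' : P' ≪ ν; swap
  · simp [hP']
  have := P.smul_finite (c := 2⁻¹) (by simp)
  have := P'.smul_finite (c := 2⁻¹) (by simp)
  rw [klDiv_eq_lintegral_klFun_of_ac ((hP.smul_left _).add_left (hP'.smul_left _)),
    klDiv_eq_lintegral_klFun_of_ac hP, klDiv_eq_lintegral_klFun_of_ac hP', hellingerDist,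
    eLpNorm_two_sq_eq_lintegral, ENNReal.div_eq_inv_mul, ← lintegral_const_mul' _ _ (by simp),
    ← lintegral_const_mul' _ _ (by simp), ← lintegral_add_left (by fun_prop),
    ← lintegral_add_left (by fun_prop)]
  refine lintegral_mono_ae ?_
  filter_upwards [toReal_rnDeriv_midpoint P P' ν] with x hmid
  have ha : 0 ≤ (P.rnDeriv ν x).toReal := ENNReal.toReal_nonneg
  have hb : 0 ≤ (P'.rnDeriv ν x).toReal := ENNReal.toReal_nonneg
  rw [hmid, ← ENNReal.div_eq_inv_mul, ← ENNReal.ofReal_ofNat 2,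
    ← ENNReal.ofReal_div_of_pos two_pos, ← ENNReal.ofReal_mul two_pos.le,
    ← ENNReal.ofReal_add (mul_nonneg two_pos.le (klFun_nonneg (by positivity))) (by positivity),
    ← ENNReal.ofReal_add (klFun_nonneg ha) (klFun_nonneg hb)]
  exact ENNReal.ofReal_le_ofReal (two_mul_klFun_midpoint_add_le ha hb)

lemma hellingerDist_le_two_mul [IsFiniteMeasure P] [IsFiniteMeasure P'] [IsFiniteMeasure ν]
    {m δ : ℝ≥0∞} (hm : m ≠ ∞) (hmid : m ≤ klDiv ((2⁻¹ : ℝ≥0∞) • P + (2⁻¹ : ℝ≥0∞) • P') ν)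
    (hP : klDiv P ν ≤ m + δ ^ 2) (hP' : klDiv P' ν ≤ m + δ ^ 2) :
    hellingerDist P P' ν ≤ 2 * δ := by
  have hsum : 2 * m + hellingerDist P P' ν ^ 2 / 2 ≤ 2 * m + 2 * δ ^ 2 :=
    calc 2 * m + hellingerDist P P' ν ^ 2 / 2
      _ ≤ 2 * klDiv ((2⁻¹ : ℝ≥0∞) • P + (2⁻¹ : ℝ≥0∞) • P') ν + hellingerDist P P' ν ^ 2 / 2 := by
        gcongr
      _ ≤ klDiv P ν + klDiv P' ν := two_mul_klDiv_midpoint_add_hellingerDist_sq_le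
      _ ≤ (m + δ ^ 2) + (m + δ ^ 2) := by gcongr
      _ = 2 * m + 2 * δ ^ 2 := by ring
  have hsq := (ENNReal.add_le_add_iff_left (by finiteness)).1 hsum
  rw [ENNReal.div_le_iff two_ne_zero ENNReal.ofNat_ne_top] at hsq
  exact (ENNReal.pow_le_pow_left_iff two_ne_zero).1 (hsq.trans_eq (by ring))

/-- A set of measures which contains the limits of its sequences for setwise convergence, i.e.
convergence on every measurable set. -/
def IsSetwiseSeqClosed (C : Set (Measure α)) : Prop :=
  ∀ ⦃p : ℕ → Measure α⦄ ⦃P : Measure α⦄, (∀ n, p n ∈ C) →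
    (∀ A, MeasurableSet A → Tendsto (fun n => p n A) atTop (𝓝 (P A))) → P ∈ C

variable {C : Set (Measure α)}

lemma exists_seq_tendsto_iInf_klDiv [IsFiniteMeasure ν] (hC : ∀ P ∈ C, IsFiniteMeasure P)
    (hconv : Convex ℝ≥0∞ C) (hfin : ∃ P ∈ C, klDiv P ν ≠ ∞) :
    ∃ p : ℕ → Measure α, (∀ n, p n ∈ C ∧ klDiv (p n) ν ≠ ∞) ∧
      Tendsto (fun n => klDiv (p n) ν) atTop (𝓝 (⨅ P ∈ C, klDiv P ν)) ∧
      ∀ N n m, N ≤ n → N ≤ m → hellingerDist (p n) (p m) ν < 3 * 2⁻¹ ^ N := by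
  obtain ⟨P₀, hP₀, hP₀fin⟩ := hfin
  set I := ⨅ P ∈ C, klDiv P ν
  have hI : ∀ P ∈ C, I ≤ klDiv P ν := fun P hP => iInf₂_le P hP
  have hItop : I ≠ ∞ := ne_top_of_le_ne_top hP₀fin (hI P₀ hP₀)
  have hδ (n : ℕ) : (2⁻¹ : ℝ≥0∞) ^ n ≠ 0 := by simp
  have hnear (n : ℕ) : ∃ P ∈ C, klDiv P ν < I + (2⁻¹ ^ n) ^ 2 := by
    simpa only [I, iInf_lt_iff, exists_prop] using ENNReal.lt_add_right hItop (pow_ne_zero 2 (hδ n))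
  choose p hpC hp using hnear
  refine ⟨p, fun n => ⟨hpC n, (hp n).ne_top⟩, ?_, fun N n m hn hm => ?_⟩
  · have hlim : Tendsto (fun n : ℕ => I + (2⁻¹ ^ n) ^ 2) atTop (𝓝 I) := by
      have hpow := (ENNReal.Tendsto.pow (n := 2) (ENNReal.tendsto_pow_atTop_nhds_zero_of_lt_one
        (ENNReal.inv_lt_one.2 ENNReal.one_lt_two))).const_add I
      simpa using hpow
    exact tendsto_of_tendsto_of_tendsto_of_le_of_le tendsto_const_nhds hlim
      (fun n => hI _ (hpC n)) fun n => (hp n).le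
  · have := hC _ (hpC n)
    have := hC _ (hpC m)
    have hle (k : ℕ) (hk : N ≤ k) : klDiv (p k) ν ≤ I + (2⁻¹ ^ N) ^ 2 :=
      (hp k).le.trans (by gcongr I + ?_ ^ 2; exact pow_le_pow_right_of_le_one' (by simp) hk)
    have hmid : (2⁻¹ : ℝ≥0∞) • p n + (2⁻¹ : ℝ≥0∞) • p m ∈ C :=
      hconv (hpC n) (hpC m) zero_le zero_le ENNReal.inv_two_add_inv_two
    refine (hellingerDist_le_two_mul hItop (hI _ hmid) (hle n hn) (hle m hm)).trans_lt ?_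
    exact ENNReal.mul_lt_mul_left (hδ N) (by finiteness) (by norm_num)

theorem exists_isMinOn_klDiv [IsFiniteMeasure ν] (hC : ∀ P ∈ C, IsFiniteMeasure P)
    (hconv : Convex ℝ≥0∞ C) (hclosed : IsSetwiseSeqClosed C) (hfin : ∃ P ∈ C, klDiv P ν ≠ ∞) :
    ∃ P ∈ C, IsMinOn (fun P => klDiv P ν) C P := by
  obtain ⟨p, hp, hmin, hcauchy⟩ := exists_seq_tendsto_iInf_klDiv hC hconv hfin
  have (n : ℕ) := hC _ (hp n).1
  have hac (n : ℕ) : p n ≪ ν := (klDiv_ne_top_iff.1 (hp n).2).1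
  obtain ⟨P, _, hP, hlim⟩ := exists_tendsto_hellingerDist
    (by rw [ENNReal.tsum_mul_left, ENNReal.tsum_geometric_two]; finiteness) hcauchy
  refine ⟨P, hclosed (fun n => (hp n).1) fun A _ =>
    tendsto_measure_of_tendsto_hellingerDist hac hP hlim A, isMinOn_iff.2 fun P' hP' => ?_⟩
  exact (klDiv_le_of_tendsto_hellingerDist hP hlim hmin).trans (iInf₂_le P' hP')

theorem eq_of_isMinOn_klDiv [IsFiniteMeasure ν] [IsFiniteMeasure P] [IsFiniteMeasure P']
    (hconv : Convex ℝ≥0∞ C) (hPC : P ∈ C) (hP'C : P' ∈ C) (hPfin : klDiv P ν ≠ ∞)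
    (hP : IsMinOn (fun P => klDiv P ν) C P) (hP' : IsMinOn (fun P => klDiv P ν) C P') :
    P = P' := by
  have hle : klDiv P' ν ≤ klDiv P ν := hP' hPC
  have hmid : (2⁻¹ : ℝ≥0∞) • P + (2⁻¹ : ℝ≥0∞) • P' ∈ C :=
    hconv hPC hP'C zero_le zero_le ENNReal.inv_two_add_inv_two
  have hdist : hellingerDist P P' ν ≤ 2 * 0 :=
    hellingerDist_le_two_mul hPfin (hP hmid) (by simp) (by simpa)
  exact eq_of_hellingerDist_eq_zero (klDiv_ne_top_iff.1 hPfin).1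
    (klDiv_ne_top_iff.1 (ne_top_of_le_ne_top hPfin hle)).1 (by simpa using hdist)

lemma integrable_min_llr_zero [IsFiniteMeasure P] [IsFiniteMeasure ν] (hP : P ≪ ν) :
    Integrable (fun x => min (llr P ν x) 0) P := by
  rw [← integrable_rnDeriv_smul_iff hP]
  refine Integrable.of_bound (C := 1) ?_ (Eventually.of_forall fun x => ?_)
  · have := measurable_llr P ν
    exact Measurable.aestronglyMeasurable (by fun_prop)
  have ht : 0 ≤ (P.rnDeriv ν x).toReal := ENNReal.toReal_nonneg
  simp only [llr, smul_eq_mul]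
  generalize (P.rnDeriv ν x).toReal = t at ht
  -- `0 ≤ klFun t` means `-1 ≤ t log t - t`, hence `-1 ≤ t * min (log t) 0`.
  have hklFun := klFun_nonneg ht
  rw [klFun_apply] at hklFun
  rw [Real.norm_eq_abs, abs_of_nonpos (mul_nonpos_of_nonneg_of_nonpos ht (min_le_right _ _)),
    mul_min_of_nonneg _ _ ht, mul_zero, neg_le, le_min_iff]
  constructor <;> linarith

variable {Q : Measure α} {f : α → ℝ}

lemma integrable_min_llr_zero_of_integrable_exp [IsProbabilityMeasure P] [SigmaFinite Q]
    (hPQ : P ≪ Q) (hfQ : Integrable (fun x => Real.exp (f x)) Q) (hfP : Integrable f P) :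
    Integrable (fun x => min (llr P Q x) 0) P := by
  have hmin := integrable_min_llr_zero (hPQ.trans (absolutelyContinuous_tilted hfQ))
  set c := Real.log (∫ x, Real.exp (f x) ∂Q)
  refine (hmin.abs.add (hfP.sub (integrable_const c)).abs).mono'
    ((measurable_llr P Q).min measurable_const).aestronglyMeasurable ?_
  filter_upwards [llr_tilted_right hPQ hfQ] with x hx
  simp only [Pi.add_apply, Pi.sub_apply, hx, Real.norm_eq_abs]
  rw [abs_of_nonpos (min_le_right _ _), abs_of_nonpos (min_le_right _ _), neg_le, le_min_iff]
  constructor <;> linarith [min_le_left (-f x + c + llr P Q x) 0,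
    min_le_right (-f x + c + llr P Q x) 0, neg_abs_le (f x - c), abs_nonneg (f x - c)]

lemma integrable_llr_tilted_right_iff [IsFiniteMeasure P] [SigmaFinite Q]
    (hPQ : P ≪ Q) (hfQ : Integrable (fun x => Real.exp (f x)) Q) (hfP : Integrable f P) :
    Integrable (llr P (Q.tilted f)) P ↔ Integrable (llr P Q) P := by
  rw [integrable_congr (llr_tilted_right hPQ hfQ)]
  exact integrable_add_iff_integrable_right (hfP.neg.add (integrable_const _))

lemma KL_eq_klDiv_tilted_add [IsProbabilityMeasure P] [SigmaFinite Q]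
    (hfQ : Integrable (fun x => Real.exp (f x)) Q) (hfP : Integrable f P) :
    KL P Q = klDiv P (Q.tilted f) +
      ((∫ x, f x ∂P - Real.log (∫ x, Real.exp (f x) ∂Q) : ℝ) : EReal) := by
  by_cases hPQ : P ≪ Q ∧ Integrable (llr P Q) P
  · obtain ⟨hac, hint⟩ := hPQ
    have : NeZero Q := ⟨fun hQ => IsProbabilityMeasure.ne_zero P (by simpa [hQ] using hac)⟩
    have := isProbabilityMeasure_tilted hfQ
    have hac' := hac.trans (absolutelyContinuous_tilted hfQ)
    have hint' := (integrable_llr_tilted_right_iff hac hfQ hfP).2 hint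
    rw [KL, if_pos ⟨hac, hint⟩, ← ENNReal.ofReal_toReal (klDiv_ne_top hac' hint'),
      EReal.coe_ennreal_ofReal, max_eq_left ENNReal.toReal_nonneg,
      toReal_klDiv_of_measure_eq hac' (by simp), integral_llr_tilted_right hac hfP hfQ hint,
      ← EReal.coe_add]
    congr 1
    ring
  · have htop : klDiv P (Q.tilted f) = ∞ := by
      refine klDiv_eq_top_iff.2 fun hac' hint' => hPQ ?_
      have hac := hac'.trans (tilted_absolutelyContinuous Q f)
      exact ⟨hac, (integrable_llr_tilted_right_iff hac hfQ hfP).1 hint'⟩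
    rw [KL, if_neg hPQ, htop, EReal.coe_ennreal_top, EReal.top_add_coe]

theorem exists_unique_isMinOn_KL [SigmaFinite Q] {C : Set (Measure α)} {v : ℝ}
    (hC : ∀ P ∈ C, IsProbabilityMeasure P) (hconv : Convex ℝ≥0∞ C) (hclosed : IsSetwiseSeqClosed C)
    (hfQ : Integrable (fun x => Real.exp (f x)) Q) (hfC : ∀ P ∈ C, Integrable f P ∧ ∫ x, f x ∂P = v)
    (hfin : ∃ P ∈ C, KL P Q ≠ ⊤) :
    ∃ P ∈ C, IsMinOn (fun P => KL P Q) C P ∧ ∀ P' ∈ C, IsMinOn (fun P => KL P Q) C P' → P' = P := by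
  have hKL (P) (hP : P ∈ C) : KL P Q = klDiv P (Q.tilted f) +
      ((v - Real.log (∫ x, Real.exp (f x) ∂Q) : ℝ) : EReal) := by
    have := hC P hP
    rw [KL_eq_klDiv_tilted_add hfQ (hfC P hP).1, (hfC P hP).2]
  have hmin_iff (P) (hP : P ∈ C) :
      IsMinOn (fun P => KL P Q) C P ↔ IsMinOn (fun P => klDiv P (Q.tilted f)) C P := by
    simp only [isMinOn_iff]
    refine forall₂_congr fun P' hP' => ?_
    rw [hKL P hP, hKL P' hP', (EReal.addLECancellable_coe _).add_le_add_iff_right,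
      EReal.coe_ennreal_le_coe_ennreal_iff]
  have hfinite (P) (hP : P ∈ C) : IsFiniteMeasure P := have := hC P hP; inferInstance
  obtain ⟨P₀, hP₀, hP₀top⟩ := hfin
  have hP₀fin : klDiv P₀ (Q.tilted f) ≠ ∞ := fun htop => hP₀top <| by
    rw [hKL P₀ hP₀, htop, EReal.coe_ennreal_top, EReal.top_add_coe]
  obtain ⟨P, hP, hPmin⟩ := exists_isMinOn_klDiv hfinite hconv hclosed ⟨P₀, hP₀, hP₀fin⟩
  refine ⟨P, hP, (hmin_iff P hP).2 hPmin, fun P' hP' hP'min => ?_⟩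
  have := hfinite P hP
  have := hfinite P' hP'
  exact (eq_of_isMinOn_klDiv hconv hP hP' (ne_top_of_le_ne_top hP₀fin (hPmin hP₀)) hPmin
    ((hmin_iff P' hP').1 hP'min)).symm

section Couplings

variable {S : Type*} {X : S → Type*} [∀ i, MeasurableSpace (X i)] {μ : ∀ i, Measure (X i)}

/-- The probability measures on the product space with marginals `μ i`. -/
def couplings (μ : ∀ i, Measure (X i)) : Set (Measure (∀ i, X i)) :=
  {P | IsProbabilityMeasure P ∧ ∀ i, P.map (fun x => x i) = μ i}

lemma convex_couplings (μ : ∀ i, Measure (X i)) : Convex ℝ≥0∞ (couplings μ) := by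
  rintro P ⟨hP, hPμ⟩ P' ⟨hP', hP'μ⟩ a b - - hab
  refine ⟨⟨by simpa using hab⟩, fun i => ?_⟩
  rw [Measure.map_add _ _ (measurable_pi_apply i), Measure.map_smul, Measure.map_smul, hPμ, hP'μ,
    ← add_smul, hab, one_smul]

lemma isSetwiseSeqClosed_couplings (μ : ∀ i, Measure (X i)) :
    IsSetwiseSeqClosed (couplings μ) := by
  refine fun p P hp hlim => ⟨⟨?_⟩, fun i => ?_⟩
  · have (n : ℕ) := (hp n).1
    exact tendsto_nhds_unique (hlim Set.univ .univ) (by simp)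
  · ext A hA
    have hpA (n : ℕ) : p n ((fun x => x i) ⁻¹' A) = μ i A := by
      rw [← (hp n).2 i, Measure.map_apply (measurable_pi_apply i) hA]
    rw [Measure.map_apply (measurable_pi_apply i) hA]
    refine tendsto_nhds_unique (hlim _ (measurable_pi_apply i hA)) ?_
    simp only [hpA, tendsto_const_nhds]

lemma measurePreserving_eval_of_mem_couplings {P : Measure (∀ i, X i)} (hP : P ∈ couplings μ)
    (i : S) :
    MeasurePreserving (fun x : ∀ i, X i => x i) P (μ i) :=
  ⟨measurable_pi_apply i, hP.2 i⟩

variable [Fintype S] {φ : ∀ i, X i → ℝ}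

lemma integrable_sum_of_mem_couplings (hφ : ∀ i, Integrable (φ i) (μ i)) {P : Measure (∀ i, X i)}
    (hP : P ∈ couplings μ) : Integrable (fun x => ∑ i, φ i (x i)) P :=
  integrable_finsetSum _ fun i _ =>
    (measurePreserving_eval_of_mem_couplings hP i).integrable_comp_of_integrable (hφ i)

lemma integral_sum_of_mem_couplings (hφ : ∀ i, Integrable (φ i) (μ i)) {P : Measure (∀ i, X i)}
    (hP : P ∈ couplings μ) : ∫ x, ∑ i, φ i (x i) ∂P = ∑ i, ∫ y, φ i y ∂(μ i) := by
  have hint (i : S) : Integrable (fun x : ∀ i, X i => φ i (x i)) P :=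
    (measurePreserving_eval_of_mem_couplings hP i).integrable_comp_of_integrable (hφ i)
  rw [integral_finsetSum _ fun i _ => hint i]
  refine Finset.sum_congr rfl fun i _ => ?_
  rw [← hP.2 i, integral_map (measurable_pi_apply i).aemeasurable
    (hP.2 i ▸ (hφ i).aestronglyMeasurable)]

theorem kl_min_exists_unique_of_exponential_moment_general (Q : Measure (∀ i, X i)) [SigmaFinite Q]
    (B : ∀ i, X i → ℝ) (hBQ : Integrable (fun x => Real.exp (-∑ i, B i (x i))) Q)
    (hBμ : ∀ i, Integrable (B i) (μ i)) :
    (∀ P ∈ couplings μ, P ≪ Q → Integrable (fun x => min (llr P Q x) 0) P) ∧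
    (∃ c : ℝ, ∀ P ∈ couplings μ, (c : EReal) ≤ KL P Q) ∧
    ((∃ P₀ ∈ couplings μ, KL P₀ Q ≠ ⊤) →
      ∃ Pmin ∈ couplings μ, (∀ P ∈ couplings μ, KL Pmin Q ≤ KL P Q) ∧
        ∀ P' ∈ couplings μ, (∀ P ∈ couplings μ, KL P' Q ≤ KL P Q) → P' = Pmin) := by
  have hint {P} (hP : P ∈ couplings μ) : Integrable (fun x => -∑ i, B i (x i)) P :=
    (integrable_sum_of_mem_couplings hBμ hP).neg
  have hintegral {P} (hP : P ∈ couplings μ) :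
      ∫ x, -∑ i, B i (x i) ∂P = -∑ i, ∫ y, B i y ∂(μ i) := by
    rw [integral_neg, integral_sum_of_mem_couplings hBμ hP]
  refine ⟨fun P hP hPQ => ?_, ⟨-∑ i, ∫ y, B i y ∂(μ i) -
    Real.log (∫ x, Real.exp (-∑ i, B i (x i)) ∂Q), fun P hP => ?_⟩, fun hfin => ?_⟩
  · have := hP.1
    exact integrable_min_llr_zero_of_integrable_exp hPQ hBQ (hint hP)
  · have := hP.1
    rw [KL_eq_klDiv_tilted_add hBQ (hint hP), hintegral hP]
    exact le_add_of_nonneg_left (EReal.coe_ennreal_nonneg _)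
  · simpa only [isMinOn_iff] using exists_unique_isMinOn_KL (fun P hP => hP.1) (convex_couplings μ)
      (isSetwiseSeqClosed_couplings μ) hBQ (fun P hP => ⟨hint hP, hintegral hP⟩) hfin

end Couplings

end KullbackLeibler

/-- Existence and uniqueness of a minimiser of `KL(· ‖ Q)` over the set `Γ` of couplings with
prescribed marginals `μ i`, under the exponential-moment condition
`z_B = ∫ exp(−∑_{i∈S} B(x_i)) dQ ∈ (0, ∞)` and `∫ B dμ_i < ∞`: on `Γ ∩ {Π ≪ Q}` the quantity
`KL(Π ‖ Q)` is well-defined in `(−∞, +∞]` (its negative part is integrable) and bounded below,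
and if it is finite somewhere on `Γ` then it admits a unique minimiser over `Γ`. -/
theorem kl_min_exists_unique_of_exponential_moment
    {S : Type*} [Fintype S] [Nonempty S] (d : ℕ) (hd : 1 ≤ d)
    (Q : Measure (S → Fin d → ℝ)) [SigmaFinite Q]
    (B : (Fin d → ℝ) → ℝ) (hB_meas : Measurable B) (hB_nonneg : ∀ y, 0 ≤ B y)
    (hzB_pos : 0 < ∫⁻ x, ENNReal.ofReal (Real.exp (-∑ i, B (x i))) ∂Q)
    (hzB_fin : ∫⁻ x, ENNReal.ofReal (Real.exp (-∑ i, B (x i))) ∂Q < ∞)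
    (μ : S → Measure (Fin d → ℝ)) [∀ i, IsProbabilityMeasure (μ i)]
    (hB_int : ∀ i, Integrable B (μ i))
    (Γ : Set (Measure (S → Fin d → ℝ)))
    (hΓ : Γ = {P : Measure (S → Fin d → ℝ) | IsProbabilityMeasure P ∧
      ∀ i, P.map (fun x => x i) = μ i}) :
    (∀ P ∈ Γ, P ≪ Q → Integrable (fun x => min (llr P Q x) 0) P) ∧
    (∃ c : ℝ, ∀ P ∈ Γ, P ≪ Q → (c : EReal) ≤ KL P Q) ∧
    ((∃ P₀ ∈ Γ, KL P₀ Q ≠ ⊤) →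
      ∃ Pmin ∈ Γ, (∀ P ∈ Γ, KL Pmin Q ≤ KL P Q) ∧
        ∀ P' ∈ Γ, (∀ P ∈ Γ, KL P' Q ≤ KL P Q) → P' = Pmin) := by
  subst hΓ
  have hBQ : Integrable (fun x => Real.exp (-∑ i, B (x i))) Q :=
    (lintegral_ofReal_ne_top_iff_integrable
      (Measurable.aestronglyMeasurable (by fun_prop)) (ae_of_all _ fun _ => (Real.exp_pos _).le)).1
      hzB_fin.ne
  obtain ⟨hnegPart, ⟨c, hc⟩, hmin⟩ :=
    kl_min_exists_unique_of_exponential_moment_general Q (fun _ => B) hBQ hB_int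
  exact ⟨hnegPart, ⟨c, fun P hP _ => hc P hP⟩, hmin⟩
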